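/- arXiv:1912.10665 — 2 statements merged into one kernel-verified Lean document; each statement's English description precedes it below -/
import Mathlib

section
/- Let Γ ⊆ ℕ contain arbitrarily long intervals of consecutive integers (for every L ∈ ℕ there is m with {m, m+1, ..., m+L} ⊆ Γ). Then the system E(ℤ∖(Γ∪(−Γ))) = {e^{2πint} : n ∈ ℤ, n ∉ Γ, −n ∉ Γ} does not span L²(𝕋, w) for some nonnegative integrable weight w on (0,1) satisfying ∫₀¹ log w(t) dt = −∞. -/
open MeasureTheory

noncomputable section

/-- The weighted measure `w(t) dt` on `(0,1)`. -/
def wMeasure (w : ℝ → ℝ) : Measure ℝ :=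
  (volume.restrict (Set.Ioo (0:ℝ) 1)).withDensity (fun t => ENNReal.ofReal (w t))

/-- The exponential `e^{2πiλt}`. -/
def expf (l : ℝ) : ℝ → ℂ := fun t => Complex.exp (2 * Real.pi * Complex.I * l * t)

/-- Finite linear combinations of the exponentials `e^{2πiλt}`, `λ ∈ S`, are dense in
`L²([0,1], w(t)dt)`. -/
def ExpSpans (w : ℝ → ℝ) (S : Set ℝ) : Prop :=
  closure ((Submodule.span ℂ
      {g : Lp ℂ 2 (wMeasure w) | ∃ l ∈ S, (g : ℝ → ℂ) =ᵐ[wMeasure w] expf l} :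
        Submodule ℂ (Lp ℂ 2 (wMeasure w))) : Set (Lp ℂ 2 (wMeasure w))) = Set.univ

/-- `∫₀¹ log w(t) dt = -∞`: the positive part is finite and the negative part is infinite. -/
def LogIntNegInf (w : ℝ → ℝ) : Prop :=
  (∫⁻ t in Set.Ioo (0:ℝ) 1, ENNReal.ofReal (Real.log (w t))) ≠ ⊤ ∧
  (∫⁻ t in Set.Ioo (0:ℝ) 1, ENNReal.ofReal (-(Real.log (w t)))) = ⊤

/-- Integer exponential. -/
def ee (n : ℤ) : ℝ → ℂ := expf (n : ℝ)

/-- Trigonometric polynomials with spectrum in `S`. -/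
def TT (S : Set ℤ) : Submodule ℂ (ℝ → ℂ) := Submodule.span ℂ (ee '' S)

/-- Lebesgue measure on `(0,1)`. -/
abbrev mu : Measure ℝ := volume.restrict (Set.Ioo (0:ℝ) 1)

lemma ee_mul (m n : ℤ) : ee m * ee n = ee (m + n) := by
  funext t
  simp only [Pi.mul_apply, ee, expf, ← Complex.exp_add]
  congr 1
  push_cast
  ring

lemma ee_mem {S : Set ℤ} {n : ℤ} (h : n ∈ S) : ee n ∈ TT S :=
  Submodule.subset_span ⟨n, h, rfl⟩

lemma TT_mono {S S' : Set ℤ} (h : S ⊆ S') : TT S ≤ TT S' :=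
  Submodule.span_mono (Set.image_mono h)

lemma TT_mul {S S' S'' : Set ℤ} (h : ∀ a ∈ S, ∀ b ∈ S', a + b ∈ S'') {f g : ℝ → ℂ}
    (hf : f ∈ TT S) (hg : g ∈ TT S') : f * g ∈ TT S'' := by
  have h1 : f * g ∈ TT S * TT S' := Submodule.mul_mem_mul hf hg
  unfold TT at h1
  rw [Submodule.span_mul_span] at h1
  refine (Submodule.span_mono ?_) h1
  rintro _ ⟨_, ⟨a, ha, rfl⟩, _, ⟨b, hb, rfl⟩, rfl⟩
  exact ⟨a + b, h a ha b hb, (ee_mul a b).symm⟩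

lemma ee_cont (n : ℤ) : Continuous (ee n) := by
  unfold ee expf
  fun_prop

lemma TT_cont {S : Set ℤ} {f : ℝ → ℂ} (hf : f ∈ TT S) : Continuous f := by
  induction hf using Submodule.span_induction with
  | mem x h => obtain ⟨n, _, rfl⟩ := h; exact ee_cont n
  | zero => exact continuous_const
  | add x y _ _ hx hy => exact hx.add hy
  | smul a x _ hx => exact hx.const_smul a

lemma cont_int {E : Type*} [NormedAddCommGroup E] {f : ℝ → E} (hf : Continuous f) :
    Integrable f mu :=
  (hf.continuousOn.integrableOn_Icc (a := (0:ℝ)) (b := 1)).mono_set Set.Ioo_subset_Icc_self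

lemma ee_int {n : ℤ} (hn : n ≠ 0) : ∫ t, ee n t ∂mu = 0 := by
  rw [← integral_Ioc_eq_integral_Ioo, ← intervalIntegral.integral_of_le zero_le_one]
  have hc : (2 * Real.pi * Complex.I * n : ℂ) ≠ 0 := by
    simp [Real.pi_ne_zero, hn]
  have := integral_exp_mul_complex (a := 0) (b := 1) hc
  simp only [ee, expf, Complex.ofReal_intCast]
  rw [this]
  have h2 : Complex.exp (2 * Real.pi * Complex.I * n * (1:ℝ)) = 1 := by
    rw [Complex.exp_eq_one_iff]
    exact ⟨n, by push_cast; ring⟩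
  rw [h2]; simp

lemma TT_int {S : Set ℤ} (hS : 0 ∉ S) {f : ℝ → ℂ} (hf : f ∈ TT S) : ∫ t, f t ∂mu = 0 := by
  induction hf using Submodule.span_induction with
  | mem x h =>
    obtain ⟨n, h, rfl⟩ := h
    exact ee_int (fun h0 => hS (h0 ▸ h))
  | zero => simp
  | add x y hx' hy' hx hy =>
    have := integral_add (cont_int (TT_cont hx')) (cont_int (TT_cont hy'))
    simp only [Pi.add_apply]
    rw [this, hx, hy, add_zero]
  | smul a x _ hx =>
    simp only [Pi.smul_apply]
    rw [integral_smul, hx, smul_zero]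

/-- complexification -/
def cc (u : ℝ → ℝ) : ℝ → ℂ := fun t => (u t : ℂ)

/-- the cosine of frequency `M` -/
def cs (M : ℕ) : ℝ → ℝ := fun t => Real.cos (2 * Real.pi * M * t)

lemma cs_cont (M : ℕ) : Continuous (cs M) := by unfold cs; fun_prop

lemma cc_int_zero {S : Set ℤ} (hS : 0 ∉ S) {u : ℝ → ℝ} (hf : cc u ∈ TT S) :
    ∫ t, u t ∂mu = 0 := by
  have := TT_int hS hf
  unfold cc at this
  rw [integral_complex_ofReal] at this
  exact_mod_cast this

lemma cc_mul (u v : ℝ → ℝ) : cc (u * v) = cc u * cc v := by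
  funext t; simp [cc]

lemma cc_cont {S : Set ℤ} {u : ℝ → ℝ} (hf : cc u ∈ TT S) : Continuous u := by
  have h := Complex.continuous_re.comp (TT_cont hf)
  exact h

lemma cs_mem (M : ℕ) : cc (cs M) ∈ TT {n : ℤ | n.natAbs = M} := by
  have : cc (cs M) = (1/2 : ℂ) • (ee M + ee (-M)) := by
    funext t
    simp only [cc, cs, ee, expf, Pi.smul_apply, Pi.add_apply, smul_eq_mul]
    push_cast
    rw [Complex.cos]
    have h1 : (2 * Real.pi * M * t * Complex.I : ℂ) = 2 * Real.pi * Complex.I * M * t := by ring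
    have h2 : (-(2 * Real.pi * M * t) * Complex.I : ℂ) = 2 * Real.pi * Complex.I * (-M) * t := by
      ring
    rw [h1, h2]; ring
  rw [this]
  exact Submodule.smul_mem _ _ (Submodule.add_mem _ (ee_mem (by simp)) (ee_mem (by simp)))

lemma cs_sq (M : ℕ) (t : ℝ) : cs M t ^ 2 = 1/2 + 1/2 * cs (2 * M) t := by
  unfold cs
  rw [Real.cos_sq]
  push_cast
  rw [show 2 * (2 * Real.pi * M * t) = 2 * Real.pi * (2 * M) * t by ring]
  ring

lemma cs_sq_int {M : ℕ} (hM : 1 ≤ M) : ∫ t, cs M t ^ 2 ∂mu = 1/2 := by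
  simp_rw [cs_sq]
  rw [integral_add (integrable_const _) ((cont_int (cs_cont _)).const_mul _), integral_const_mul,
    cc_int_zero (S := {n : ℤ | n.natAbs = 2 * M}) _ (cs_mem _)]
  · simp
  · simp; omega

/-- State of the construction. -/
structure Good (Γ : Set ℕ) (m0 : ℕ) (D : ℕ) (u : ℝ → ℝ) : Prop where
  mem : cc u ∈ TT {n : ℤ | n.natAbs ∈ Γ ∧ n.natAbs ≤ D}
  le : ∀ t, |u t| ≤ 1
  sgn : ∀ t, 0 ≤ u t * cs m0 t
  m0D : m0 ≤ D

lemma step (Γ : Set ℕ) (hlong : ∀ L : ℕ, ∃ m : ℕ, 1 ≤ m ∧ ∀ j : ℕ, j ≤ L → m + j ∈ Γ)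
    (m0 D : ℕ) (u : ℝ → ℝ) (hu : Good Γ m0 D u) :
    ∃ (D' : ℕ) (v : ℝ → ℝ), Good Γ m0 D' v ∧ D ≤ D' ∧
      (∀ p : ℝ → ℝ, cc p ∈ TT {n : ℤ | n.natAbs ≤ D} → ∫ t, v t * p t ∂mu = ∫ t, u t * p t ∂mu) ∧
      ∫ t, (v t - u t) ^ 2 ∂mu = 1/8 * ∫ t, (u t - u t ^ 3) ^ 2 ∂mu := by
  obtain ⟨m, hm1, hm⟩ := hlong (20 * D + 20)
  set M := m + 10 * D + 10 with hM
  have hu1 : cc u ∈ TT {n : ℤ | n.natAbs ≤ D} := TT_mono (fun n hn => hn.2) hu.mem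
  have hu2 : cc (u * u) ∈ TT {n : ℤ | n.natAbs ≤ 2 * D} := by
    rw [cc_mul]; refine TT_mul ?_ hu1 hu1
    intro a ha b hb; simp only [Set.mem_ofPred_eq] at *; omega
  have hu3 : cc (u * u * u) ∈ TT {n : ℤ | n.natAbs ≤ 3 * D} := by
    rw [cc_mul]; refine TT_mul ?_ hu2 hu1
    intro a ha b hb; simp only [Set.mem_ofPred_eq] at *; omega
  set p : ℝ → ℝ := fun t => u t - u t ^ 3 with hp
  have hpm : cc p ∈ TT {n : ℤ | n.natAbs ≤ 3 * D} := by
    have : cc p = cc u - cc (u * u * u) := by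
      funext t; simp [cc, hp]; ring
    rw [this]
    refine Submodule.sub_mem _ (TT_mono ?_ hu1) hu3
    intro n hn; simp only [Set.mem_ofPred_eq] at *; omega
  have hpc : cc (p * cs M) ∈ TT {n : ℤ | M ≤ n.natAbs + 3 * D ∧ n.natAbs ≤ M + 3 * D} := by
    rw [cc_mul]; refine TT_mul ?_ hpm (cs_mem M)
    intro a ha b hb; simp only [Set.mem_ofPred_eq] at *; omega
  have hucont := cc_cont hu1
  have hpcont : Continuous p := by rw [hp]; fun_prop
  have hcc := cs_cont M
  refine ⟨M + 3 * D, fun t => u t + 1/2 * (p t * cs M t), ⟨?_, ?_, ?_, ?_⟩, by omega, ?_, ?_⟩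
  · have : cc (fun t => u t + 1/2 * (p t * cs M t)) = cc u + (1/2 : ℂ) • cc (p * cs M) := by
      funext t; simp [cc]
    rw [this]
    refine Submodule.add_mem _ (TT_mono ?_ hu.mem) (Submodule.smul_mem _ _ (TT_mono ?_ hpc))
    · intro n hn; simp only [Set.mem_ofPred_eq] at *; exact ⟨hn.1, by omega⟩
    · intro n hn; simp only [Set.mem_ofPred_eq] at *
      refine ⟨?_, hn.2⟩
      have := hm (n.natAbs - m) (by omega)
      rwa [show m + (n.natAbs - m) = n.natAbs by omega] at this
  · intro t
    have h1 := hu.le t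
    have hc : |cs M t| ≤ 1 := Real.abs_cos_le_one _
    have e : u t + 1/2 * (p t * cs M t) = u t * (1 + 1/2 * (1 - u t ^ 2) * cs M t) := by
      simp only [hp]; ring
    rw [e, abs_mul]
    have hs : u t ^ 2 = |u t| ^ 2 := (sq_abs _).symm
    rw [hs]
    set a := |u t|
    have ha : 0 ≤ a := abs_nonneg _
    have h2 : |1 + 1/2 * (1 - a ^ 2) * cs M t| ≤ 1 + 1/2 * (1 - a ^ 2) := by
      have := abs_le.1 hc
      have h3 : 0 ≤ 1 - a ^ 2 := by nlinarith
      rw [abs_le]; constructor <;> nlinarith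
    calc a * _ ≤ a * (1 + 1/2 * (1 - a ^ 2)) := by gcongr
      _ ≤ 1 := by nlinarith [mul_nonneg ha (sub_nonneg.2 h1), sq_nonneg (1 - a), mul_nonneg (sq_nonneg (1-a)) ha]
  · intro t
    have h1 := hu.le t
    have hc := abs_le.1 (Real.abs_cos_le_one (2 * Real.pi * M * t))
    have e : (u t + 1/2 * (p t * cs M t)) * cs m0 t
        = (u t * cs m0 t) * (1 + 1/2 * (1 - u t ^ 2) * cs M t) := by
      simp only [hp]; ring
    rw [e]
    refine mul_nonneg (hu.sgn t) ?_
    have h3 : 0 ≤ 1 - u t ^ 2 := by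
      have := abs_le.1 h1; nlinarith
    have h4 : -1 ≤ cs M t := hc.1
    nlinarith [sq_nonneg (u t)]
  · have := hu.m0D; omega
  · intro q hq
    have hqc := cc_cont hq
    have h0 : ∫ t, (p * cs M * q) t ∂mu = 0 := by
      refine cc_int_zero (S := {n : ℤ | n ≠ 0}) (by simp) ?_
      rw [cc_mul]; refine TT_mul ?_ hpc hq
      intro a ha b hb; simp only [Set.mem_ofPred_eq] at *; omega
    have e : ∀ t, (u t + 1/2 * (p t * cs M t)) * q t = u t * q t + 1/2 * (p * cs M * q) t := by
      intro t; simp only [Pi.mul_apply]; ring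
    simp_rw [e]
    have i1 : Integrable (fun t => u t * q t) mu := cont_int (by fun_prop)
    have i2 : Integrable (fun t => (p * cs M * q) t) mu := cont_int ((hpcont.mul hcc).mul hqc)
    rw [integral_add i1 (i2.const_mul _), integral_const_mul, h0]
    simp
  · have h0 : ∫ t, (p * p * cs (2 * M)) t ∂mu = 0 := by
      refine cc_int_zero (S := {n : ℤ | n ≠ 0}) (by simp) ?_
      rw [cc_mul, cc_mul]
      refine TT_mul (S := {n : ℤ | n.natAbs ≤ 6 * D}) ?_ (TT_mul ?_ hpm hpm) (cs_mem _)
      · intro a ha b hb; simp only [Set.mem_ofPred_eq] at *; omega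
      · intro a ha b hb; simp only [Set.mem_ofPred_eq] at *; omega
    have e : ∀ t, (u t + 1/2 * (p t * cs M t) - u t) ^ 2
        = 1/8 * (p t) ^ 2 + 1/8 * (p * p * cs (2 * M)) t := by
      intro t
      have := cs_sq M t
      simp only [Pi.mul_apply]
      linear_combination (1/4 * p t ^ 2) * this
    simp_rw [e]
    have i1 : Integrable (fun t => p t ^ 2) mu := cont_int (by fun_prop)
    have i2 : Integrable (fun t => (p * p * cs (2 * M)) t) mu :=
      cont_int ((hpcont.mul hpcont).mul (cs_cont _))
    rw [integral_add (i1.const_mul _) (i2.const_mul _), integral_const_mul,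
      integral_const_mul, h0]
    simp [hp]

lemma exists_seq (Γ : Set ℕ) (hlong : ∀ L : ℕ, ∃ m : ℕ, 1 ≤ m ∧ ∀ j : ℕ, j ≤ L → m + j ∈ Γ) :
    ∃ (m0 : ℕ) (D : ℕ → ℕ) (u : ℕ → ℝ → ℝ), 1 ≤ m0 ∧ (∀ k, Good Γ m0 (D k) (u k)) ∧
      (∀ j k, j ≤ k → ∀ p : ℝ → ℝ, cc p ∈ TT {n : ℤ | n.natAbs ≤ D j} →
        ∫ t, u k t * p t ∂mu = ∫ t, u j t * p t ∂mu) ∧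
      (∀ k, ∫ t, (u (k+1) t - u k t) ^ 2 ∂mu = 1/8 * ∫ t, (u k t - u k t ^ 3) ^ 2 ∂mu) ∧
      (∀ k, ∫ t, u k t * cs m0 t ∂mu = 1/4) := by
  obtain ⟨m0, h1, hm⟩ := hlong 0
  have h0 : m0 ∈ Γ := hm 0 le_rfl
  have g0 : Good Γ m0 m0 (fun t => 1/2 * cs m0 t) := by
    refine ⟨?_, ?_, ?_, le_rfl⟩
    · have : cc (fun t => 1/2 * cs m0 t) = (1/2 : ℂ) • cc (cs m0) := by
        funext t; simp [cc]
      rw [this]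
      refine Submodule.smul_mem _ _ (TT_mono ?_ (cs_mem m0))
      intro n hn
      simp only [Set.mem_ofPred_eq] at *
      rw [hn]; exact ⟨h0, le_rfl⟩
    · intro t
      have : |cs m0 t| ≤ 1 := Real.abs_cos_le_one _
      rw [abs_mul, abs_of_pos (by norm_num : (0:ℝ) < 1/2)]; linarith
    · intro t
      nlinarith [sq_nonneg (cs m0 t)]
  have hstep : ∀ x : {x : ℕ × (ℝ → ℝ) // Good Γ m0 x.1 x.2},
      ∃ y : {x : ℕ × (ℝ → ℝ) // Good Γ m0 x.1 x.2}, x.1.1 ≤ y.1.1 ∧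
      (∀ p : ℝ → ℝ, cc p ∈ TT {n : ℤ | n.natAbs ≤ x.1.1} →
        ∫ t, y.1.2 t * p t ∂mu = ∫ t, x.1.2 t * p t ∂mu) ∧
      ∫ t, (y.1.2 t - x.1.2 t) ^ 2 ∂mu = 1/8 * ∫ t, (x.1.2 t - x.1.2 t ^ 3) ^ 2 ∂mu := by
    rintro ⟨⟨D, u⟩, hu⟩
    obtain ⟨D', v, h1, h2, h3, h4⟩ := step Γ hlong m0 D u hu
    exact ⟨⟨⟨D', v⟩, h1⟩, h2, h3, h4⟩
  choose nxt n1 n2 n3 using hstep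
  obtain ⟨s, hs0, hs⟩ : ∃ s : ℕ → {x : ℕ × (ℝ → ℝ) // Good Γ m0 x.1 x.2},
      s 0 = ⟨⟨m0, fun t => 1/2 * cs m0 t⟩, g0⟩ ∧ ∀ k, s (k+1) = nxt (s k) :=
    ⟨fun k => Nat.rec ⟨⟨m0, fun t => 1/2 * cs m0 t⟩, g0⟩ (fun _ x => nxt x) k, rfl, fun _ => rfl⟩
  have hD : Monotone (fun k => (s k).1.1) := monotone_nat_of_le_succ (fun k => by
    rw [hs]; exact n1 (s k))
  have horth : ∀ j k, j ≤ k → ∀ p : ℝ → ℝ, cc p ∈ TT {n : ℤ | n.natAbs ≤ (s j).1.1} →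
        ∫ t, (s k).1.2 t * p t ∂mu = ∫ t, (s j).1.2 t * p t ∂mu := by
    intro j k hjk p hp
    induction k, hjk using Nat.le_induction with
    | base => rfl
    | succ k hk ih =>
      rw [hs, n2 (s k) p _, ih]
      refine TT_mono ?_ hp
      intro n hn
      simp only [Set.mem_ofPred_eq] at *
      exact hn.trans (hD hk)
  refine ⟨m0, fun k => (s k).1.1, fun k => (s k).1.2, h1, fun k => (s k).2, horth,
    fun k => by simp only [hs]; exact n3 (s k), fun k => ?_⟩
  have hm0 : cc (cs m0) ∈ TT {n : ℤ | n.natAbs ≤ (s 0).1.1} := by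
    have hd0 : (s 0).1.1 = m0 := by rw [hs0]
    refine TT_mono ?_ (cs_mem m0)
    intro n hn
    simp only [Set.mem_ofPred_eq] at *
    omega
  rw [horth 0 k (Nat.zero_le _) (cs m0) hm0, hs0]
  simp only
  have e : ∀ t, 1/2 * cs m0 t * cs m0 t = 1/2 * cs m0 t ^ 2 := fun t => by ring
  simp_rw [e]
  rw [integral_const_mul, cs_sq_int h1]; norm_num

open Filter Topology in
lemma exists_f (Γ : Set ℕ) (hlong : ∀ L : ℕ, ∃ m : ℕ, 1 ≤ m ∧ ∀ j : ℕ, j ≤ L → m + j ∈ Γ) :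
    ∃ (m0 : ℕ) (f : ℝ → ℝ), 1 ≤ m0 ∧ Measurable f ∧ (∀ᵐ t ∂mu, |f t| ≤ 1) ∧
      (∀ᵐ t ∂mu, f t = 0 ∨ |f t| = 1) ∧ (∀ᵐ t ∂mu, 0 ≤ f t * cs m0 t) ∧
      ∫ t, f t * cs m0 t ∂mu = 1/4 ∧
      ∀ n : ℤ, n.natAbs ∉ Γ → ∫ t, (f t : ℂ) * ee n t ∂mu = 0 := by
  obtain ⟨m0, D, u, h1, hg, horth, hinc, hcs⟩ := exists_seq Γ hlong
  have hcont : ∀ k, Continuous (u k) := fun k => cc_cont (hg k).mem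
  have hmem : ∀ k, cc (u k) ∈ TT {n : ℤ | n.natAbs ≤ D k} := fun k =>
    TT_mono (fun n hn => hn.2) (hg k).mem
  have hLp : ∀ k, MemLp (u k) 2 mu := fun k =>
    MemLp.of_bound (hcont k).aestronglyMeasurable 1 (ae_of_all _ (fun t => by
      simpa using (hg k).le t))
  let F : ℕ → Lp ℝ 2 mu := fun k => (hLp k).toLp (u k)
  have hF : ∀ k, (F k : ℝ → ℝ) =ᵐ[mu] u k := fun k => (hLp k).coeFn_toLp
  have hin : ∀ j k, inner ℝ (F k) (F j) = ∫ t, u k t * u j t ∂mu := by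
    intro j k
    rw [L2.inner_def]
    refine integral_congr_ae ?_
    filter_upwards [hF j, hF k] with t h1 h2
    rw [h1, h2]; simp [mul_comm]
  let a : ℕ → ℝ := fun k => ‖F k‖ ^ 2
  have hin2 : ∀ j k, j ≤ k → inner ℝ (F k) (F j) = a j := by
    intro j k hjk
    rw [hin, horth j k hjk (u j) (hmem j), ← hin,
      real_inner_self_eq_norm_sq]
  have hd : ∀ j k, j ≤ k → ‖F k - F j‖ ^ 2 = a k - a j := by
    intro j k hjk
    rw [norm_sub_sq_real, hin2 j k hjk]; simp only [a]; ring
  have hmono : Monotone a := by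
    intro j k hjk
    have := hd j k hjk
    nlinarith [sq_nonneg ‖F k - F j‖]
  have hbd : ∀ k, a k ≤ 1 := by
    intro k
    simp only [a]
    rw [← real_inner_self_eq_norm_sq, hin]
    calc ∫ t, u k t * u k t ∂mu ≤ ∫ t, (1:ℝ) ∂mu := by
          refine integral_mono (cont_int ((hcont k).mul (hcont k))) (integrable_const _) ?_
          intro t
          have := abs_le.1 ((hg k).le t)
          simp only; nlinarith
      _ = 1 := by simp
  have hconv : Tendsto a atTop (𝓝 (⨆ k, a k)) :=
    tendsto_atTop_ciSup hmono ⟨1, by rintro _ ⟨k, rfl⟩; exact hbd k⟩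
  have hacau : CauchySeq a := hconv.cauchySeq
  have hFcau : CauchySeq F := by
    rw [Metric.cauchySeq_iff'] at hacau ⊢
    intro ε hε
    obtain ⟨N, hN⟩ := hacau (ε ^ 2) (by positivity)
    refine ⟨N, fun n hn => ?_⟩
    have h2 := hN n hn
    rw [Real.dist_eq] at h2
    rw [dist_eq_norm]
    have h3 := hd N n hn
    have h4 := le_abs_self (a n - a N)
    exact lt_of_pow_lt_pow_left₀ 2 hε.le (by linarith)
  obtain ⟨G, hG⟩ := cauchySeq_tendsto_of_complete hFcau
  obtain ⟨ns, hns, hae⟩ := (tendstoInMeasure_of_tendsto_Lp hG).exists_seq_tendsto_ae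
  have hFall : ∀ᵐ t ∂mu, ∀ k, F k t = u k t := ae_all_iff.2 hF
  have hmeas : Measurable (G : ℝ → ℝ) := (Lp.stronglyMeasurable G).measurable
  generalize (G : ℝ → ℝ) = f at hmeas hae
  have hlim : ∀ᵐ t ∂mu, Tendsto (fun i => u (ns i) t) atTop (𝓝 (f t)) := by
    filter_upwards [hae, hFall] with t ht h2
    simpa only [h2] using ht
  refine ⟨m0, f, h1, hmeas, ?_, ?_, ?_, ?_, ?_⟩
  · filter_upwards [hlim] with t ht
    exact le_of_tendsto' ht.abs (fun i => (hg _).le t)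
  · have hz : ∫ t, (f t - f t ^ 3) ^ 2 ∂mu = 0 := by
      have t1 : Tendsto (fun i => ∫ t, (u (ns i) t - u (ns i) t ^ 3) ^ 2 ∂mu) atTop
          (𝓝 (∫ t, (f t - f t ^ 3) ^ 2 ∂mu)) := by
        refine tendsto_integral_of_dominated_convergence (fun _ => 4) ?_ (integrable_const _) ?_ ?_
        · intro i
          have := hcont (ns i)
          exact Continuous.aestronglyMeasurable (by fun_prop)
        · intro i
          refine ae_of_all _ (fun t => ?_)
          have h2 := (hg (ns i)).le t
          have h3 : |u (ns i) t - u (ns i) t ^ 3| ≤ 2 := by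
            refine (abs_sub _ _).trans ?_
            rw [abs_pow]
            have := pow_le_one₀ (abs_nonneg _) h2 (n := 3)
            linarith
          rw [Real.norm_eq_abs, abs_pow]
          nlinarith [abs_nonneg (u (ns i) t - u (ns i) t ^ 3)]
        · filter_upwards [hlim] with t ht
          exact (ht.sub (ht.pow 3)).pow 2
      have t2 : Tendsto (fun k => ∫ t, (u k t - u k t ^ 3) ^ 2 ∂mu) atTop (𝓝 0) := by
        have e : ∀ k, ∫ t, (u k t - u k t ^ 3) ^ 2 ∂mu = 8 * (a (k+1) - a k) := by
          intro k
          have e1 : ‖F (k+1) - F k‖ ^ 2 = ∫ t, (u (k+1) t - u k t) ^ 2 ∂mu := by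
            rw [← real_inner_self_eq_norm_sq, L2.inner_def]
            refine integral_congr_ae ?_
            filter_upwards [hF k, hF (k+1), Lp.coeFn_sub (F (k+1)) (F k)] with t h1 h2 h3
            rw [h3, Pi.sub_apply, h1, h2]
            simp only [RCLike.inner_apply, conj_trivial]
            ring
          have := hinc k
          rw [← e1, hd k (k+1) (Nat.le_succ k)] at this
          linarith
        simp_rw [e]
        have := ((hconv.comp (tendsto_add_atTop_nat 1)).sub hconv).const_mul 8
        simpa using this
      exact tendsto_nhds_unique t1 (t2.comp hns.tendsto_atTop)
    have hint : Integrable (fun t => (f t - f t ^ 3) ^ 2) mu := by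
      have hm : AEStronglyMeasurable (fun t => (f t - f t ^ 3) ^ 2) mu :=
        (by fun_prop : Measurable (fun t => (f t - f t ^ 3) ^ 2)).aestronglyMeasurable
      refine Integrable.of_bound hm 4 ?_
      filter_upwards [hlim] with t ht
      have h2 : |f t| ≤ 1 := le_of_tendsto' ht.abs (fun i => (hg _).le t)
      have h3 : |f t - f t ^ 3| ≤ 2 := by
        refine (abs_sub _ _).trans ?_
        rw [abs_pow]
        have := pow_le_one₀ (abs_nonneg _) h2 (n := 3)
        linarith
      rw [Real.norm_eq_abs, abs_pow]
      nlinarith [abs_nonneg (f t - f t ^ 3)]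
    have := (integral_eq_zero_iff_of_nonneg (fun t => sq_nonneg _) hint).1 hz
    filter_upwards [this] with t ht
    have h2 : f t - f t ^ 3 = 0 := by simpa using ht
    have h3 : f t * (1 - f t ^ 2) = 0 := by linarith [h2, (by ring : f t * (1 - f t ^ 2) = f t - f t ^ 3)]
    rcases mul_eq_zero.1 h3 with h | h
    · exact Or.inl h
    · right
      have : |f t| ^ 2 = 1 := by rw [sq_abs]; linarith
      nlinarith [abs_nonneg (f t)]
  · filter_upwards [hlim] with t ht
    exact ge_of_tendsto' (ht.mul_const _) (fun i => (hg _).sgn t)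
  · have t1 : Tendsto (fun i => ∫ t, u (ns i) t * cs m0 t ∂mu) atTop
        (𝓝 (∫ t, f t * cs m0 t ∂mu)) := by
      refine tendsto_integral_of_dominated_convergence (fun _ => 1) ?_ (integrable_const _) ?_ ?_
      · intro i
        exact ((hcont (ns i)).mul (cs_cont m0)).aestronglyMeasurable
      · intro i
        refine ae_of_all _ (fun t => ?_)
        rw [Real.norm_eq_abs, abs_mul]
        exact mul_le_one₀ ((hg (ns i)).le t) (abs_nonneg _) (Real.abs_cos_le_one _)
      · filter_upwards [hlim] with t ht
        exact ht.mul_const _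
    simp_rw [hcs] at t1
    exact tendsto_nhds_unique t1 tendsto_const_nhds
  · intro n hn
    have t1 : Tendsto (fun i => ∫ t, (u (ns i) t : ℂ) * ee n t ∂mu) atTop
        (𝓝 (∫ t, (f t : ℂ) * ee n t ∂mu)) := by
      have hee : ∀ t, ‖ee n t‖ = 1 := by
        intro t
        have : (2 * Real.pi * Complex.I * (n:ℝ) * t : ℂ) = ((2 * Real.pi * n * t : ℝ) : ℂ) * Complex.I := by
          push_cast; ring
        simp only [ee, expf]
        rw [this, Complex.norm_exp_ofReal_mul_I]
      refine tendsto_integral_of_dominated_convergence (fun _ => 1) ?_ (integrable_const _) ?_ ?_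
      · intro i
        exact ((Complex.continuous_ofReal.comp (hcont (ns i))).mul (ee_cont n)).aestronglyMeasurable
      · intro i
        refine ae_of_all _ (fun t => ?_)
        rw [norm_mul, hee, mul_one, Complex.norm_real]
        exact (hg (ns i)).le t
      · filter_upwards [hlim] with t ht
        exact ((Complex.continuous_ofReal.tendsto _).comp ht).mul_const _
    have hz : ∀ i, ∫ t, (u (ns i) t : ℂ) * ee n t ∂mu = 0 := by
      intro i
      refine TT_int (S := {k : ℤ | k ≠ 0}) (f := cc (u (ns i)) * ee n) (by simp) ?_
      refine TT_mul ?_ (hg (ns i)).mem (ee_mem (S := {n}) rfl)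
      rintro x ⟨hx, -⟩ y hy h
      rw [Set.mem_singleton_iff] at hy
      subst hy
      apply hn
      rwa [show y.natAbs = x.natAbs by omega]
    simp_rw [hz] at t1
    exact tendsto_nhds_unique t1 tendsto_const_nhds

open Filter Topology in
lemma exists_point {Z : Set ℝ} (hZ : volume Z ≠ 0) :
    ∃ x : ℝ, ∫⁻ t in Z, ENNReal.ofReal (1 / |t - x|) = ⊤ := by
  have hne : (ae (volume.restrict Z)).NeBot := by
    rw [ae_neBot]; simpa using hZ
  obtain ⟨x, hx⟩ := (Besicovitch.ae_tendsto_measure_inter_div volume Z).exists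
  refine ⟨x, ?_⟩
  by_contra hfin
  have hball : Tendsto ((volume.restrict Z) ∘ fun r : ℝ => Metric.closedBall x r) (𝓝[>] 0)
      (𝓝 0) := by
    have h1 : Tendsto (fun r : ℝ => ENNReal.ofReal (2 * r)) (𝓝[>] 0) (𝓝 0) := by
      have : Continuous (fun r : ℝ => ENNReal.ofReal (2 * r)) :=
        ENNReal.continuous_ofReal.comp (by fun_prop)
      have h2 := this.tendsto 0
      simp only [mul_zero, ENNReal.ofReal_zero] at h2
      exact h2.mono_left nhdsWithin_le_nhds
    refine tendsto_of_tendsto_of_tendsto_of_le_of_le tendsto_const_nhds h1 (fun _ => zero_le) ?_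
    intro r
    refine (Measure.restrict_apply_le _ _).trans ?_
    rw [Real.volume_closedBall]
  have hlim := tendsto_setLIntegral_zero hfin hball
  have e1 := hlim.eventually (gt_mem_nhds (show (0:ENNReal) < 1 by simp))
  have e2 := hx.eventually (lt_mem_nhds (show (1/2:ENNReal) < 1 by
    rw [one_div]; exact ENNReal.one_half_lt_one))
  obtain ⟨r, h1, h2, hr⟩ := (e1.and (e2.and self_mem_nhdsWithin)).exists
  have hr : 0 < r := hr
  rw [Real.volume_closedBall] at h2
  have h3 : ENNReal.ofReal r ≤ volume (Z ∩ Metric.closedBall x r) := by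
    have h4 := (ENNReal.le_div_iff_mul_le (Or.inl (by simpa using hr))
      (Or.inl ENNReal.ofReal_ne_top)).1 h2.le
    refine le_trans (le_of_eq ?_) h4
    rw [show (1/2 : ENNReal) = ENNReal.ofReal (1/2) by
      rw [ENNReal.ofReal_div_of_pos (by norm_num)]; simp, ← ENNReal.ofReal_mul (by norm_num)]
    congr 1; ring
  refine absurd h1 (not_lt.2 ?_)
  rw [Measure.restrict_restrict measurableSet_closedBall, Set.inter_comm]
  calc (1:ENNReal) = ENNReal.ofReal (1/r) * ENNReal.ofReal r := by
        rw [← ENNReal.ofReal_mul (by positivity), one_div_mul_cancel hr.ne']; simp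
    _ ≤ ENNReal.ofReal (1/r) * volume (Z ∩ Metric.closedBall x r) := by gcongr
    _ = ∫⁻ t in Z ∩ Metric.closedBall x r, ENNReal.ofReal (1/r) := by
        rw [setLIntegral_const]
    _ ≤ _ := by
        refine lintegral_mono_ae ?_
        have a1 : ∀ᵐ t ∂(volume.restrict (Z ∩ Metric.closedBall x r)), t ∈ Metric.closedBall x r :=
          ae_mono (Measure.restrict_mono Set.inter_subset_right le_rfl)
            (ae_restrict_mem measurableSet_closedBall)
        have a2 : ∀ᵐ t ∂(volume.restrict (Z ∩ Metric.closedBall x r)), t ≠ x :=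
          ae_restrict_of_ae (Measure.ae_ne volume x)
        filter_upwards [a1, a2] with t h1 h2
        rw [Metric.mem_closedBall, Real.dist_eq] at h1
        have : 0 < |t - x| := abs_pos.2 (sub_ne_zero.2 h2)
        gcongr

theorem long_intervals_not_complete (Γ : Set ℕ) (hΓ0 : 0 ∉ Γ)
    (hlong : ∀ L : ℕ, ∃ m : ℕ, 1 ≤ m ∧ ∀ j : ℕ, j ≤ L → m + j ∈ Γ) :
    ∃ w : ℝ → ℝ, (∀ t ∈ Set.Ioo (0:ℝ) 1, 0 ≤ w t) ∧
      IntegrableOn w (Set.Ioo (0:ℝ) 1) ∧ LogIntNegInf w ∧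
      ¬ ExpSpans w {x : ℝ | ∃ n : ℤ, n.natAbs ∉ Γ ∧ x = n} := by
  classical
  obtain ⟨m0, f, hm0, hmeas, hle, hval, hsgn, hcs, hort⟩ := exists_f Γ hlong
  set Z : Set ℝ := {t | t ∈ Set.Ioo (0:ℝ) 1 ∧ f t = 0} with hZdef
  have hZm : MeasurableSet Z :=
    measurableSet_Ioo.inter (hmeas (measurableSet_singleton 0))
  have hZ : volume Z ≠ 0 := by
    intro h0
    have hnz : ∀ᵐ t ∂mu, f t ≠ 0 := by
      rw [ae_restrict_iff' measurableSet_Ioo]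
      have : ∀ᵐ t, t ∉ Z := measure_eq_zero_iff_ae_notMem.1 h0
      filter_upwards [this] with t ht h1 h2
      exact ht ⟨h1, h2⟩
    have hge : ∫ t, cs m0 t ^ 2 ∂mu ≤ ∫ t, f t * cs m0 t ∂mu := by
      refine integral_mono_ae (cont_int ((cs_cont m0).pow 2)) ?_ ?_
      · by_contra hni
        rw [integral_undef hni] at hcs
        norm_num at hcs
      · filter_upwards [hnz, hval, hsgn] with t h1 h2 h3
        have h4 : |f t| = 1 := h2.resolve_left h1
        have h5 : f t * cs m0 t = |cs m0 t| := by
          rw [← abs_of_nonneg h3, abs_mul, h4, one_mul]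
        rw [h5]
        change cs m0 t ^ 2 ≤ _
        have h6 : |cs m0 t| ≤ 1 := Real.abs_cos_le_one _
        rw [← sq_abs]
        nlinarith [abs_nonneg (cs m0 t)]
    rw [cs_sq_int hm0, hcs] at hge
    norm_num at hge
  obtain ⟨x, hx⟩ := exists_point hZ
  let w : ℝ → ℝ := fun t => if t ∈ Z then Real.exp (-(1 / |t - x|)) else 1
  have hwm : Measurable w := by
    refine Measurable.ite hZm ?_ measurable_const
    fun_prop
  have hwpos : ∀ t, 0 < w t := by
    intro t; simp only [w]; split_ifs
    · exact Real.exp_pos _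
    · exact one_pos
  have hw1 : ∀ t, w t ≤ 1 := by
    intro t; simp only [w]; split_ifs
    · rw [Real.exp_le_one_iff]
      have : 0 ≤ 1 / |t - x| := by positivity
      linarith
    · exact le_rfl
  have hwint : Integrable w mu := by
    refine Integrable.of_bound hwm.aestronglyMeasurable 1 (ae_of_all _ fun t => ?_)
    rw [Real.norm_eq_abs, abs_of_pos (hwpos t)]; exact hw1 t
  refine ⟨w, fun t _ => (hwpos t).le, hwint, ⟨?_, ?_⟩, ?_⟩
  · have : ∀ t, ENNReal.ofReal (Real.log (w t)) = 0 := fun t =>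
      ENNReal.ofReal_eq_zero.2 (Real.log_nonpos (hwpos t).le (hw1 t))
    simp [this]
  · rw [eq_top_iff, ← hx]
    calc ∫⁻ t in Z, ENNReal.ofReal (1 / |t - x|)
        = ∫⁻ t in Z, ENNReal.ofReal (-(Real.log (w t))) := by
          refine setLIntegral_congr_fun hZm (fun t ht => ?_)
          simp only [w, if_pos ht, Real.log_exp, neg_neg]
      _ ≤ _ := lintegral_mono_set (fun t ht => ht.1)
  · intro hspan
    have : IsFiniteMeasure (wMeasure w) := isFiniteMeasure_withDensity_ofReal hwint.2
    have hac : wMeasure w ≪ mu := withDensity_absolutelyContinuous _ _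
    have hgL : MemLp (fun t => (f t : ℂ)) 2 (wMeasure w) := by
      refine MemLp.of_bound (Complex.measurable_ofReal.comp hmeas).aestronglyMeasurable 1 ?_
      filter_upwards [hac.ae_le hle] with t ht
      rwa [Complex.norm_real]
    let g : Lp ℂ 2 (wMeasure w) := hgL.toLp _
    have hg : (g : ℝ → ℂ) =ᵐ[wMeasure w] fun t => (f t : ℂ) := hgL.coeFn_toLp
    have hperp : Submodule.span ℂ {g : Lp ℂ 2 (wMeasure w) | ∃ l ∈ {x : ℝ | ∃ n : ℤ,
        n.natAbs ∉ Γ ∧ x = n}, (g : ℝ → ℂ) =ᵐ[wMeasure w] expf l} ≤ (ℂ ∙ g)ᗮ := by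
      rw [Submodule.span_le]
      rintro h ⟨_, ⟨n, hn, rfl⟩, hh⟩
      rw [SetLike.mem_coe, Submodule.mem_orthogonal_singleton_iff_inner_right, L2.inner_def]
      have e1 : ∫ t, inner ℂ (g t) (h t) ∂(wMeasure w)
          = ∫ t, (f t : ℂ) * ee n t ∂(wMeasure w) := by
        refine integral_congr_ae ?_
        filter_upwards [hg, hh] with t h1 h2
        rw [h1, h2]
        simp [ee, mul_comm]
      rw [e1, wMeasure, integral_withDensity_eq_integral_toReal_smul hwm.ennreal_ofReal
        (ae_of_all _ fun t => ENNReal.ofReal_lt_top), ← hort n hn]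
      refine integral_congr_ae ?_
      filter_upwards [ae_restrict_mem measurableSet_Ioo] with t ht
      rw [ENNReal.toReal_ofReal (hwpos t).le]
      by_cases hf : f t = 0
      · simp [hf]
      · have : w t = 1 := if_neg (fun h => hf h.2)
        rw [this, one_smul]
    have hcl : g ∈ (ℂ ∙ g)ᗮ := by
      have h1 : g ∈ closure ((Submodule.span ℂ {g : Lp ℂ 2 (wMeasure w) | ∃ l ∈ {x : ℝ | ∃ n : ℤ,
        n.natAbs ∉ Γ ∧ x = n}, (g : ℝ → ℂ) =ᵐ[wMeasure w] expf l} :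
          Submodule ℂ (Lp ℂ 2 (wMeasure w))) : Set (Lp ℂ 2 (wMeasure w))) := by
        unfold ExpSpans at hspan
        rw [hspan]; trivial
      exact closure_minimal (SetLike.coe_subset_coe.2 hperp)
        (Submodule.isClosed_orthogonal _) h1
    rw [Submodule.mem_orthogonal_singleton_iff_inner_right, inner_self_eq_zero] at hcl
    have hz : ∀ᵐ t ∂(wMeasure w), f t = 0 := by
      have h0 := Lp.coeFn_zero ℂ 2 (wMeasure w)
      rw [← hcl] at h0
      filter_upwards [h0, hg] with t h1 h2
      rw [h2] at h1
      simpa using h1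
    rw [wMeasure, ae_withDensity_iff hwm.ennreal_ofReal] at hz
    have : ∫ t, f t * cs m0 t ∂mu = 0 := by
      rw [integral_eq_zero_of_ae]
      filter_upwards [hz] with t ht
      rw [ht (by simpa using hwpos t)]; simp
    rw [hcs] at this
    norm_num at this
end
end

section
/- For every positive function ψ on (0,∞) with ψ(t) → 0 as t → ∞, there exists a set Γ ⊆ ℕ such that Σ_{γ∈Γ} ψ(γ) < ∞ and the system E(ℕ∖Γ) = {e^{2πint} : n ∈ ℕ∖Γ} does not span L²(𝕋, w) for some nonnegative integrable weight w on (0,1) satisfying ∫₀¹ log w(t) dt = −∞. -/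
open MeasureTheory Filter

noncomputable section

namespace SparseGamma
open scoped Pointwise

def E (n : ℤ) : ℝ → ℂ := fun t => Complex.exp (-(2 * Real.pi * Complex.I * n * t))

lemma E_add (a b : ℤ) : E (a + b) = E a * E b := by
  funext t
  simp only [E, Pi.mul_apply, ← Complex.exp_add]
  congr 1
  push_cast
  ring

lemma E_zero : E 0 = 1 := by
  funext t
  simp [E]

def TP (S : Set ℤ) : Submodule ℂ (ℝ → ℂ) := Submodule.span ℂ (E '' S)

lemma E_mem {S : Set ℤ} {n : ℤ} (h : n ∈ S) : E n ∈ TP S :=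
  Submodule.subset_span ⟨n, h, rfl⟩

lemma TP_mono {S T : Set ℤ} (h : S ⊆ T) : TP S ≤ TP T :=
  Submodule.span_mono (Set.image_mono h)

lemma TP_mul {S T : Set ℤ} {f g : ℝ → ℂ} (hf : f ∈ TP S) (hg : g ∈ TP T) :
    f * g ∈ TP (S + T) := by
  have h := Submodule.mul_mem_mul hf hg
  unfold TP at h
  rw [Submodule.span_mul_span] at h
  refine Submodule.span_mono ?_ h
  rintro _ ⟨_, ⟨a, ha, rfl⟩, _, ⟨b, hb, rfl⟩, rfl⟩
  exact ⟨a + b, Set.add_mem_add ha hb, E_add a b⟩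

lemma TP_dil {S : Set ℤ} {f : ℝ → ℂ} (hf : f ∈ TP S) (M : ℕ) :
    (fun t : ℝ => f ((M : ℝ) * t)) ∈ TP ((fun j : ℤ => (M : ℤ) * j) '' S) := by
  unfold TP at hf
  induction hf using Submodule.span_induction with
  | mem x h =>
    obtain ⟨n, hn, rfl⟩ := h
    have : (fun t : ℝ => E n ((M : ℝ) * t)) = E (M * n) := by
      funext t
      simp only [E]
      congr 1
      push_cast
      ring
    rw [this]
    exact E_mem ⟨n, hn, rfl⟩
  | zero => exact Submodule.zero_mem _
  | add x y _ _ hx hy => exact Submodule.add_mem _ hx hy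
  | smul a x _ hx => exact Submodule.smul_mem _ a hx

def IsTP (f : ℝ → ℂ) : Prop := ∃ N : ℕ, f ∈ TP (Set.Icc (-(N : ℤ)) N)

lemma IsTP.add {f g : ℝ → ℂ} (hf : IsTP f) (hg : IsTP g) : IsTP (f + g) := by
  obtain ⟨a, ha⟩ := hf
  obtain ⟨b, hb⟩ := hg
  refine ⟨a + b, Submodule.add_mem _ (TP_mono ?_ ha) (TP_mono ?_ hb)⟩ <;>
  · intro x hx
    simp only [Set.mem_Icc] at *
    push_cast
    omega

lemma IsTP.mul {f g : ℝ → ℂ} (hf : IsTP f) (hg : IsTP g) : IsTP (f * g) := by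
  obtain ⟨a, ha⟩ := hf
  obtain ⟨b, hb⟩ := hg
  refine ⟨a + b, TP_mono ?_ (TP_mul ha hb)⟩
  rintro _ ⟨x, hx, y, hy, rfl⟩
  simp only [Set.mem_Icc] at *
  push_cast
  omega

lemma IsTP.smul {f : ℝ → ℂ} (c : ℂ) (hf : IsTP f) : IsTP (c • f) := by
  obtain ⟨a, ha⟩ := hf
  exact ⟨a, Submodule.smul_mem _ c ha⟩

lemma IsTP_E (n : ℤ) : IsTP (E n) := by
  refine ⟨n.natAbs, E_mem ?_⟩
  simp only [Set.mem_Icc]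
  omega

lemma IsTP_one : IsTP 1 := E_zero ▸ IsTP_E 0

lemma IsTP.pow {f : ℝ → ℂ} (hf : IsTP f) (n : ℕ) : IsTP (f ^ n) := by
  induction n with
  | zero => simpa using IsTP_one
  | succ n ih => rw [pow_succ]; exact ih.mul hf

lemma IsTP_sin_sq : IsTP (fun t : ℝ => ((Real.sin (Real.pi * t) ^ 2 : ℝ) : ℂ)) := by
  have h : (fun t : ℝ => ((Real.sin (Real.pi * t) ^ 2 : ℝ) : ℂ)) =
      (1/2 : ℂ) • 1 + ((-1/4 : ℂ) • E 1 + (-1/4 : ℂ) • E (-1)) := by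
    funext t
    rw [Real.sin_sq_eq_half_sub]
    simp only [E, Pi.add_apply, Pi.smul_apply, Pi.one_apply, smul_eq_mul]
    push_cast
    rw [Complex.cos]
    have h1 : -(2 * (Real.pi : ℂ) * Complex.I * 1 * t) = -(2 * (Real.pi * t)) * Complex.I := by ring
    have h2 : -(2 * (Real.pi : ℂ) * Complex.I * (-1) * t) = (2 * (Real.pi * t)) * Complex.I := by ring
    rw [h1, h2]
    ring
  rw [h]
  exact (IsTP_one.smul _).add (((IsTP_E _).smul _).add ((IsTP_E _).smul _))

/-- the blocks -/
def Rb (n : ℕ) (t : ℝ) : ℝ := 2 * n * (Real.sin (Real.pi * t) ^ 2) ^ n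
def Pb (n : ℕ) (t : ℝ) : ℝ := (1 - (1/2) * (Real.sin (Real.pi * t) ^ 2) ^ n) ^ (4 * n)

lemma s_bd (n : ℕ) (t : ℝ) : 0 ≤ (Real.sin (Real.pi * t) ^ 2) ^ n ∧
    (Real.sin (Real.pi * t) ^ 2) ^ n ≤ 1 :=
  ⟨by positivity, pow_le_one₀ (sq_nonneg _) (Real.sin_sq_le_one _)⟩

lemma Pb_pos (n : ℕ) (t : ℝ) : 0 < Pb n t := by
  have := s_bd n t
  unfold Pb
  apply pow_pos
  linarith

lemma Pb_le (n : ℕ) (t : ℝ) : Pb n t ≤ 1 := by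
  have := s_bd n t
  unfold Pb
  apply pow_le_one₀ <;> linarith

lemma Pb_exp (n : ℕ) (t : ℝ) : Pb n t ≤ Real.exp (- Rb n t) := by
  have h := s_bd n t
  have h1 := Real.add_one_le_exp (-((1/2) * (Real.sin (Real.pi * t) ^ 2) ^ n))
  calc Pb n t ≤ (Real.exp (-((1/2) * (Real.sin (Real.pi * t) ^ 2) ^ n))) ^ (4 * n) := by
        unfold Pb
        apply pow_le_pow_left₀ <;> linarith
    _ = _ := by
        rw [← Real.exp_nat_mul]
        congr 1
        unfold Rb
        push_cast
        ring

lemma Rb_nonneg (n : ℕ) (t : ℝ) : 0 ≤ Rb n t := by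
  unfold Rb; positivity

lemma Pb_cont (n : ℕ) : Continuous (Pb n) := by unfold Pb; fun_prop
lemma Rb_cont (n : ℕ) : Continuous (Rb n) := by unfold Rb; fun_prop

lemma sin_per (t : ℝ) : Real.sin (Real.pi * (t + 1)) ^ 2 = Real.sin (Real.pi * t) ^ 2 := by
  rw [mul_add, mul_one, Real.sin_add_pi, neg_sq]

lemma Pb_per (n : ℕ) : Function.Periodic (Pb n) 1 := fun t => by
  unfold Pb; rw [sin_per]
lemma Rb_per (n : ℕ) : Function.Periodic (Rb n) 1 := fun t => by
  unfold Rb; rw [sin_per]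

lemma Pb_TP (n : ℕ) : IsTP (fun t => (Pb n t : ℂ)) := by
  have : (fun t => (Pb n t : ℂ)) =
    (1 + (-1/2 : ℂ) • (fun t : ℝ => ((Real.sin (Real.pi * t) ^ 2 : ℝ) : ℂ)) ^ n) ^ (4 * n) := by
    funext t
    simp only [Pb, Pi.add_apply, Pi.smul_apply, Pi.one_apply, smul_eq_mul, Pi.pow_apply]
    push_cast
    ring
  rw [this]
  exact (IsTP_one.add ((IsTP_sin_sq.pow n).smul _)).pow _

lemma wallis_lb (n : ℕ) : (1 : ℝ) ≤ 2 * (n + 1) * ∏ i ∈ Finset.range (n + 1), ((2 * i + 1) / (2 * i + 2) : ℝ) := by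
  induction n with
  | zero => norm_num
  | succ n ih =>
    rw [Finset.prod_range_succ]
    set Q := ∏ i ∈ Finset.range (n + 1), ((2 * i + 1) / (2 * i + 2) : ℝ)
    push_cast
    have hQ : 0 ≤ Q := by by_contra h; push Not at h; nlinarith [(Nat.cast_nonneg n : (0:ℝ) ≤ n)]
    refine ih.trans ?_
    have : 2 * ((n:ℝ) + 1 + 1) * (Q * ((2 * (n + 1) + 1) / (2 * (n + 1) + 2))) = (2 * (n + 1) + 1) * Q := by
      field_simp
    rw [this]
    nlinarith

lemma Rb_int (n : ℕ) : 1 ≤ ∫ t in (0:ℝ)..1, Rb (n + 1) t := by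
  have h := intervalIntegral.integral_comp_mul_left (a := 0) (b := 1) (fun x => 2 * ((n + 1 : ℕ) : ℝ) * Real.sin x ^ (2 * (n + 1))) Real.pi_ne_zero
  have h2 : ∀ t, Rb (n + 1) t = 2 * ((n + 1 : ℕ) : ℝ) * Real.sin (Real.pi * t) ^ (2 * (n + 1)) := by
    intro t; rw [Rb, pow_mul]
  simp only [h2]
  rw [h, mul_zero, mul_one, intervalIntegral.integral_const_mul, integral_sin_pow_even, smul_eq_mul]
  have := wallis_lb n
  have hpi := Real.pi_ne_zero
  push_cast
  field_simp
  convert this using 4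
  ring

lemma Pb_int : Tendsto (fun n : ℕ => ∫ t in (0:ℝ)..1, (1 - Pb (n + 1) t)) atTop (nhds 0) := by
  have : ∫ t in (0:ℝ)..1, (0:ℝ) = 0 := by simp
  suffices H : Tendsto (fun n : ℕ => ∫ t in (0:ℝ)..1, (1 - Pb (n + 1) t)) atTop
      (nhds (∫ t in (0:ℝ)..1, (0:ℝ))) by rwa [this] at H
  apply intervalIntegral.tendsto_integral_filter_of_dominated_convergence (fun _ => 1)
  · exact .of_forall fun n => (continuous_const.sub (Pb_cont _)).aestronglyMeasurable
  · refine .of_forall fun n => .of_forall fun t _ => ?_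
    have := Pb_pos (n + 1) t
    have := Pb_le (n + 1) t
    rw [Real.norm_eq_abs, abs_le]; constructor <;> linarith
  · simp
  · have h1 : ∀ᵐ t : ℝ, t ≠ 1/2 := by
      rw [ae_iff]; simp
    have h2 : ∀ᵐ t : ℝ, t ≠ 1 := by
      rw [ae_iff]; simp
    filter_upwards [h1, h2] with t ht ht1 hm
    rw [Set.uIoc_of_le zero_le_one] at hm
    have hm1 : t < 1 := lt_of_le_of_ne hm.2 ht1
    have hs : Real.sin (Real.pi * t) ^ 2 < 1 := by
      have hc : Real.cos (Real.pi * t) ≠ 0 := by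
        intro h0
        rw [← Real.cos_pi_div_two] at h0
        have := Real.injOn_cos ⟨by have := hm.1; positivity, by nlinarith [Real.pi_pos]⟩
          ⟨by positivity, by linarith [Real.pi_pos]⟩ h0
        apply ht
        have hpi := Real.pi_ne_zero
        field_simp at this
        linarith
      have := Real.sin_sq_add_cos_sq (Real.pi * t)
      have := sq_pos_of_ne_zero hc
      linarith
    have hT := (tendsto_self_mul_const_pow_of_lt_one (sq_nonneg (Real.sin (Real.pi * t))) hs).comp (tendsto_add_atTop_nat 1)
    have hT2 := hT.const_mul 2
    rw [mul_zero] at hT2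
    refine squeeze_zero (fun n => by linarith [Pb_le (n + 1) t]) (fun n => ?_) hT2
    have hb := s_bd (n + 1) t
    have := one_add_mul_le_pow (a := -((1/2) * (Real.sin (Real.pi * t) ^ 2) ^ (n + 1))) (by linarith) (4 * (n + 1))
    simp only [Function.comp]
    unfold Pb
    rw [sub_eq_add_neg 1 ((1/2) * (Real.sin (Real.pi * t) ^ 2) ^ (n + 1))]
    push_cast at *
    linarith

lemma dil_int {F : ℝ → ℝ} (hF : Function.Periodic F 1) (hc : Continuous F) (M : ℕ) (hM : 1 ≤ M) :
    ∫ t in (0:ℝ)..1, F (M * t) = ∫ t in (0:ℝ)..1, F t := by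
  have hM0 : (M : ℝ) ≠ 0 := by positivity
  rw [intervalIntegral.integral_comp_mul_left F hM0]
  have := hF.intervalIntegral_add_zsmul_eq (M : ℤ) 0 (fun _ _ => hc.intervalIntegrable _ _)
  simp only [zero_add, zsmul_eq_mul, mul_one, Int.cast_natCast] at this
  rw [mul_zero, mul_one, this, smul_eq_mul, inv_mul_cancel_left₀ hM0]


/-- the weighted sum over positive (integer) elements -/
def sumpos (ψ : ℝ → ℝ) (D : Finset ℤ) : ℝ := ∑ d ∈ D with 0 < d, ψ d

def nextD (D : Finset ℤ) (N M : ℕ) : Finset ℤ :=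
  D + (Finset.Icc (-(N : ℤ)) N).image (fun j => (M : ℤ) * j)

lemma subset_nextD (D : Finset ℤ) (N M : ℕ) : D ⊆ nextD D N M := by
  intro d hd
  unfold nextD
  rw [Finset.mem_add]
  exact ⟨d, hd, 0, Finset.mem_image.2 ⟨0, by simp, by simp⟩, by simp⟩

lemma step (ψ : ℝ → ℝ) (hψpos : ∀ t : ℝ, 0 < t → 0 < ψ t)
    (hψ0 : Tendsto ψ atTop (nhds 0)) (D : Finset ℤ) (N : ℕ) (ε : ℝ) (hε : 0 < ε) :
    ∃ M : ℕ, 1 ≤ M ∧ sumpos ψ (nextD D N M) ≤ sumpos ψ D + ε := by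
  classical
  obtain ⟨B, hB⟩ : ∃ B : ℕ, ∀ d ∈ D, d.natAbs ≤ B := ⟨D.sup Int.natAbs, fun d hd => Finset.le_sup (f := Int.natAbs) hd⟩
  set C : ℝ := D.card * (Finset.Icc (-(N : ℤ)) N).card + 1 with hC
  have hCpos : 0 < C := by positivity
  obtain ⟨X, hX⟩ := (hψ0.eventually_lt_const (show 0 < ε / C by positivity)).exists_forall_of_atTop
  refine ⟨B + ⌈X⌉₊ + 1, by omega, ?_⟩
  set M := B + ⌈X⌉₊ + 1 with hM
  unfold sumpos
  rw [← Finset.sum_filter_add_sum_filter_not _ (fun d => d ∈ D)]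
  refine add_le_add ?_ ?_
  · refine Finset.sum_le_sum_of_subset_of_nonneg ?_ ?_
    · intro d hd
      simp only [Finset.mem_filter] at *
      tauto
    · intro d hd _
      simp only [Finset.mem_filter] at hd
      exact (hψpos _ (by exact_mod_cast hd.2)).le
  · calc _ ≤ ∑ d ∈ ((nextD D N M).filter (fun d => 0 < d)).filter (fun d => ¬ d ∈ D), ε / C := by
          refine Finset.sum_le_sum fun d hd => ?_
          simp only [Finset.mem_filter, nextD, Finset.mem_add, Finset.mem_image] at hd
          obtain ⟨⟨⟨a, ha, _, ⟨j, hj, rfl⟩, rfl⟩, hpos⟩, hnot⟩ := hd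
          have hBa := hB a ha
          have hj0 : 0 < j := by
            by_contra hj0
            rcases eq_or_lt_of_le (not_lt.1 hj0) with h | h
            · subst h; simp at hnot; exact hnot ha
            · have : (M : ℤ) * j ≤ M * (-1) := by gcongr; omega
              omega
          have h1 : (M : ℤ) * 1 ≤ M * j := by gcongr; omega
          have h2 : ((⌈X⌉₊ : ℕ) : ℤ) ≤ a + M * j := by omega
          refine (hX _ ((Nat.le_ceil X).trans ?_)).le
          exact_mod_cast h2
      _ = _ * (ε / C) := by rw [Finset.sum_const, nsmul_eq_mul]
      _ ≤ C * (ε / C) := by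
          gcongr
          have h1 : (((nextD D N M).filter (fun d => 0 < d)).filter (fun d => ¬ d ∈ D)).card ≤
              D.card * (Finset.Icc (-(N : ℤ)) N).card := by
            refine (Finset.card_filter_le _ _).trans ((Finset.card_filter_le _ _).trans ?_)
            refine (Finset.card_add_le (s := D) (t := (Finset.Icc (-(N : ℤ)) N).image (fun j => (M : ℤ) * j))).trans ?_
            refine Nat.mul_le_mul_left _ ?_
            exact Finset.card_image_le (s := Finset.Icc (-(N : ℤ)) N) (f := fun j => (M : ℤ) * j)
          have h2 : ((((nextD D N M).filter (fun d => 0 < d)).filter (fun d => ¬ d ∈ D)).card : ℝ) ≤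
              D.card * (Finset.Icc (-(N : ℤ)) N).card := by exact_mod_cast h1
          linarith
      _ = ε := by field_simp

lemma E_cont (n : ℤ) : Continuous (E n) := by unfold E; fun_prop

lemma TP_cont {S : Set ℤ} {f : ℝ → ℂ} (hf : f ∈ TP S) : Continuous f := by
  unfold TP at hf
  induction hf using Submodule.span_induction with
  | mem x h => obtain ⟨n, hn, rfl⟩ := h; exact E_cont n
  | zero => exact continuous_const
  | add x y _ _ hx hy => exact hx.add hy
  | smul a x _ hx => exact hx.const_smul a

lemma E_int (n : ℤ) (hn : n ≠ 0) : ∫ t in (0:ℝ)..1, E n t = 0 := by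
  have hc : -(2 * (Real.pi : ℂ) * Complex.I * n) ≠ 0 := by
    simp [Real.pi_ne_zero, hn]
  have h := integral_exp_mul_complex (a := 0) (b := 1) hc
  have h2 : ∀ t : ℝ, E n t = Complex.exp (-(2 * (Real.pi : ℂ) * Complex.I * n) * t) := by
    intro t; unfold E; congr 1; ring
  simp only [h2]
  rw [h]
  have h3 : Complex.exp (-(2 * (Real.pi : ℂ) * Complex.I * n) * (1 : ℝ)) = 1 := by
    rw [← Complex.exp_int_mul_two_pi_mul_I (-n)]
    congr 1; push_cast; ring
  rw [h3]
  simp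

lemma TP_int {S : Set ℤ} {f : ℝ → ℂ} (hf : f ∈ TP S) (n : ℤ) (hn : n ∉ S) :
    ∫ t in (0:ℝ)..1, f t * E (-n) t = 0 := by
  unfold TP at hf
  induction hf using Submodule.span_induction with
  | mem x h =>
    obtain ⟨m, hm, rfl⟩ := h
    have := E_int (m + -n) (fun h => hn (by rwa [show n = m by omega]))
    rw [E_add] at this
    exact this
  | zero => simp
  | add x y hx' hy' hx hy =>
    simp only [Pi.add_apply, add_mul]
    rw [intervalIntegral.integral_add, hx, hy, add_zero]
    · exact ((TP_cont hx').mul (E_cont _)).intervalIntegrable _ _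
    · exact ((TP_cont hy').mul (E_cont _)).intervalIntegrable _ _
  | smul a x _ hx =>
    simp only [Pi.smul_apply, smul_eq_mul, mul_assoc]
    rw [intervalIntegral.integral_const_mul, hx, mul_zero]

lemma inf_prod_pos (p : ℕ → ℝ) (h0 : ∀ k, 0 < p k) (h1 : ∀ k, p k ≤ 1)
    (hs : Summable (fun k => 1 - p k)) : 0 < ⨅ K, ∏ k ∈ Finset.range K, p k := by
  have hl : Summable (fun k => Real.log (p k)) := by
    have := Real.summable_log_one_add_of_summable hs.neg
    refine this.congr fun k => ?_
    congr 1; ring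
  refine lt_of_lt_of_le (Real.exp_pos (∑' k, Real.log (p k))) (le_ciInf fun K => ?_)
  have : ∏ k ∈ Finset.range K, p k = Real.exp (∑ k ∈ Finset.range K, Real.log (p k)) := by
    rw [Real.exp_sum]
    exact Finset.prod_congr rfl fun k _ => (Real.exp_log (h0 k)).symm
  rw [this]
  apply Real.exp_le_exp.2
  have := hl.neg.sum_le_tsum (Finset.range K) (fun k _ => by
    have := Real.log_nonpos (h0 k).le (h1 k); linarith)
  rw [tsum_neg, Finset.sum_neg_distrib] at this
  linarith

/-- Summary of the construction: blocks with frequencies. -/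
lemma blocks (ψ : ℝ → ℝ) (hψpos : ∀ t : ℝ, 0 < t → 0 < ψ t)
    (hψ0 : Tendsto ψ atTop (nhds 0)) :
    ∃ (D : ℕ → Finset ℤ) (p r : ℕ → ℝ → ℝ),
      Monotone D ∧ (∀ k, sumpos ψ (D k) ≤ 2) ∧
      (∀ k, Continuous (p k)) ∧ (∀ k, Continuous (r k)) ∧
      (∀ k t, 0 < p k t) ∧ (∀ k t, p k t ≤ 1) ∧ (∀ k t, 0 ≤ r k t) ∧
      (∀ k t, p k t ≤ Real.exp (- r k t)) ∧
      (∀ k, 1 ≤ ∫ t in (0:ℝ)..1, r k t) ∧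
      (∀ k, ∫ t in (0:ℝ)..1, (1 - p k t) ≤ (1/2)^k) ∧
      (∀ K, (fun t => ((∏ k ∈ Finset.range K, p k t : ℝ) : ℂ)) ∈ TP (D K)) := by
  have hn : ∀ k : ℕ, ∃ n : ℕ, ∫ t in (0:ℝ)..1, (1 - Pb (n + 1) t) ≤ (1/2)^k := fun k =>
    ((Pb_int.eventually_le_const (show (0:ℝ) < (1/2)^k by positivity)).exists)
  choose n hn using hn
  choose N hN using fun k => Pb_TP (n k + 1)
  choose Mf hM1 hM2 using fun (D : Finset ℤ) (k : ℕ) =>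
    step ψ hψpos hψ0 D (N k) ((1/2)^k) (by positivity)
  let D : ℕ → Finset ℤ := fun k => Nat.rec {0} (fun k D => nextD D (N k) (Mf D k)) k
  have hD : ∀ k, D (k + 1) = nextD (D k) (N k) (Mf (D k) k) := fun k => rfl
  have hD0 : D 0 = {0} := rfl
  let M : ℕ → ℕ := fun k => Mf (D k) k
  have hM : ∀ k, 1 ≤ M k := fun k => hM1 _ _
  refine ⟨D, fun k t => Pb (n k + 1) (M k * t), fun k t => Rb (n k + 1) (M k * t),
    monotone_nat_of_le_succ fun k => subset_nextD _ _ _, ?_, ?_, ?_, ?_, ?_, ?_, ?_, ?_, ?_, ?_⟩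
  · intro k
    have : sumpos ψ (D k) ≤ ∑ i ∈ Finset.range k, (1/2 : ℝ)^i := by
      induction k with
      | zero => simp [hD0, sumpos, Finset.filter_singleton]
      | succ k ih =>
        rw [Finset.sum_range_succ, hD]
        exact (hM2 _ _).trans (by linarith)
    refine this.trans ?_
    exact sum_geometric_two_le k
  · intro k; exact (Pb_cont _).comp (continuous_const.mul continuous_id)
  · intro k; exact (Rb_cont _).comp (continuous_const.mul continuous_id)
  · intro k t; exact Pb_pos _ _
  · intro k t; exact Pb_le _ _
  · intro k t; exact Rb_nonneg _ _
  · intro k t; exact Pb_exp _ _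
  · intro k
    rw [dil_int (Rb_per _) (Rb_cont _) _ (hM k)]
    exact Rb_int _
  · intro k
    rw [dil_int (F := fun t => 1 - Pb (n k + 1) t) (fun t => by simp only [Pb_per (n k + 1) t])
      (continuous_const.sub (Pb_cont _)) _ (hM k)]
    exact hn k
  · intro K
    induction K with
    | zero =>
      have : (fun t : ℝ => ((∏ k ∈ Finset.range 0, Pb (n k + 1) (M k * t) : ℝ) : ℂ)) = E 0 := by
        rw [E_zero]; funext t; simp
      rw [this]
      exact E_mem (by simp [hD0])
    | succ K ih =>
      have h := TP_mul ih (TP_dil (hN K) (M K))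
      have e : (fun t : ℝ => ((∏ k ∈ Finset.range (K + 1), Pb (n k + 1) (M k * t) : ℝ) : ℂ)) =
        (fun t : ℝ => ((∏ k ∈ Finset.range K, Pb (n k + 1) (M k * t) : ℝ) : ℂ)) *
          (fun t : ℝ => (Pb (n K + 1) (M K * t) : ℂ)) := by
        funext t
        rw [Finset.prod_range_succ]; push_cast; rfl
      rw [e]
      refine TP_mono ?_ h
      rw [hD, nextD, Finset.coe_add, Finset.coe_image, Finset.coe_Icc]

end SparseGamma

/-- For every positive `ψ` with `ψ(t) → 0` as `t → ∞` there is `Γ ⊆ ℕ` with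
`∑_{γ∈Γ} ψ(γ) < ∞` such that `E(ℕ∖Γ)` does not span `L²(𝕋,w)` for some nonnegative
integrable weight `w` on `(0,1)` with `∫₀¹ log w = -∞`. -/
theorem sparse_gamma_not_complete (ψ : ℝ → ℝ)
    (hψpos : ∀ t : ℝ, 0 < t → 0 < ψ t)
    (hψ0 : Tendsto ψ atTop (nhds 0)) :
    ∃ Γ : Set ℕ, 0 ∉ Γ ∧ Summable (fun γ : Γ => ψ (γ : ℝ)) ∧
      ∃ w : ℝ → ℝ, (∀ t ∈ Set.Ioo (0:ℝ) 1, 0 ≤ w t) ∧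
        IntegrableOn w (Set.Ioo (0:ℝ) 1) ∧ LogIntNegInf w ∧
        ¬ ExpSpans w {x : ℝ | ∃ n : ℕ, 1 ≤ n ∧ n ∉ Γ ∧ x = n} := by
  classical
  obtain ⟨D, p, r, hDm, hDs, hpc, hrc, hp0, hp1, hr0, hpr, hri, hpi, hTP⟩ :=
    SparseGamma.blocks ψ hψpos hψ0
  set G : ℕ → ℝ → ℝ := fun K t => ∏ k ∈ Finset.range K, p k t with hG
  have hGc : ∀ K, Continuous (G K) := fun K => continuous_finsetProd _ fun k _ => hpc k
  have hG0 : ∀ K t, 0 < G K t := fun K t => Finset.prod_pos fun k _ => hp0 k t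
  have hG1 : ∀ K t, G K t ≤ 1 := fun K t =>
    Finset.prod_le_one (fun k _ => (hp0 k t).le) fun k _ => hp1 k t
  have hGa : ∀ t, Antitone (fun K => G K t) := fun t => antitone_nat_of_succ_le fun K => by
    simp only [hG, Finset.prod_range_succ]
    exact mul_le_of_le_one_right (hG0 K t).le (hp1 K t)
  have hbdd : ∀ t, BddBelow (Set.range fun K => G K t) := fun t =>
    ⟨0, by rintro _ ⟨K, rfl⟩; exact (hG0 K t).le⟩
  set g : ℝ → ℝ := fun t => ⨅ K, G K t with hg
  have hgG : ∀ K t, g t ≤ G K t := fun K t => ciInf_le (hbdd t) K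
  have hg0 : ∀ t, 0 ≤ g t := fun t => le_ciInf fun K => (hG0 K t).le
  have hg1 : ∀ t, g t ≤ 1 := fun t => (hgG 0 t).trans (hG1 0 t)
  have hgt : ∀ t, Tendsto (fun K => G K t) atTop (nhds (g t)) := fun t =>
    tendsto_atTop_ciInf (hGa t) (hbdd t)
  have hgm : Measurable g :=
    measurable_of_tendsto_metrizable (fun K => (hGc K).measurable) (tendsto_pi_nhds.2 hgt)
  have conv : ∀ f : ℝ → ℝ, ∫ t in Set.Ioo (0:ℝ) 1, f t = ∫ t in (0:ℝ)..1, f t := fun f => by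
    rw [intervalIntegral.integral_of_le zero_le_one, integral_Ioc_eq_integral_Ioo]
  have contInt : ∀ f : ℝ → ℝ, Continuous f → IntegrableOn f (Set.Ioo 0 1) := fun f hf =>
    (hf.integrableOn_Icc (a := 0) (b := 1)).mono_set Set.Ioo_subset_Icc_self
  -- positivity almost everywhere
  have hgpos : ∀ᵐ t ∂(volume.restrict (Set.Ioo (0:ℝ) 1)), 0 < g t := by
    have hqm : ∀ k, Measurable (fun t => 1 - p k t) := fun k =>
      (continuous_const.sub (hpc k)).measurable
    have hfin : ∫⁻ t in Set.Ioo (0:ℝ) 1, ∑' k, ENNReal.ofReal (1 - p k t) ≠ ⊤ := by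
      rw [lintegral_tsum fun k =>
        (hqm k).ennreal_ofReal.aemeasurable]
      have hk : ∀ k, ∫⁻ t in Set.Ioo (0:ℝ) 1, ENNReal.ofReal (1 - p k t) ≤
          ENNReal.ofReal ((1/2)^k) := fun k => by
        rw [← ofReal_integral_eq_lintegral_ofReal (contInt (fun t => 1 - p k t) (continuous_const.sub (hpc k)))
          (.of_forall fun t => by simpa using hp1 k t), conv]
        exact ENNReal.ofReal_le_ofReal (hpi k)
      refine ne_top_of_le_ne_top ?_ (ENNReal.tsum_le_tsum hk)
      exact (summable_geometric_two).tsum_ofReal_ne_top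
    have hae := ae_lt_top' (AEMeasurable.tsum fun k =>
        (hqm k).ennreal_ofReal.aemeasurable) hfin
    filter_upwards [hae] with t ht
    refine SparseGamma.inf_prod_pos (fun k => p k t) (fun k => hp0 k t) (fun k => hp1 k t) ?_
    have := ENNReal.summable_toReal ht.ne
    refine this.congr fun k => ?_
    rw [ENNReal.toReal_ofReal]
    linarith [hp1 k t]
  have hgi : IntegrableOn g (Set.Ioo (0:ℝ) 1) := by
    refine Integrable.mono' (g := fun _ => (1:ℝ)) (integrable_const _) hgm.aestronglyMeasurable
      (.of_forall fun t => ?_)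
    rw [Real.norm_eq_abs, abs_of_nonneg (hg0 t)]
    exact hg1 t
  refine ⟨{γ : ℕ | 1 ≤ γ ∧ ∃ k, (γ : ℤ) ∈ D k}, by simp, ?_, g, fun t _ => hg0 t, hgi, ⟨?_, ?_⟩, ?_⟩
  · -- summability
    refine summable_of_sum_le (c := 2) (fun γ => (hψpos _ ?_).le) fun u => ?_
    · exact_mod_cast γ.2.1
    · obtain ⟨K, hK⟩ : ∃ K, ∀ γ ∈ u, ((γ : ℕ) : ℤ) ∈ D K := by
        choose k hk using fun γ : {γ : ℕ | 1 ≤ γ ∧ ∃ k, (γ : ℤ) ∈ D k} => γ.2.2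
        exact ⟨u.sup k, fun γ hγ => hDm (Finset.le_sup hγ) (hk γ)⟩
      refine le_trans ?_ (hDs K)
      have e : ∑ x ∈ u, ψ ((x : ℕ) : ℝ) =
          ∑ d ∈ u.image (fun x : {γ : ℕ | 1 ≤ γ ∧ ∃ k, (γ : ℤ) ∈ D k} => ((x : ℕ) : ℤ)), ψ (d : ℝ) := by
        rw [Finset.sum_image]
        · simp
        · intro a _ b _ hab
          exact Subtype.ext (Int.ofNat_inj.1 hab)
      rw [e]
      refine Finset.sum_le_sum_of_subset_of_nonneg ?_ ?_
      · intro d hd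
        obtain ⟨x, hx, rfl⟩ := Finset.mem_image.1 hd
        have := x.2.1
        exact Finset.mem_filter.2 ⟨hK x hx, by omega⟩
      · intro d hd _
        exact (hψpos _ (by exact_mod_cast (Finset.mem_filter.1 hd).2)).le
  · have : ∀ t, ENNReal.ofReal (Real.log (g t)) = 0 := fun t =>
      ENNReal.ofReal_of_nonpos (Real.log_nonpos (hg0 t) (hg1 t))
    simp [this]
  · -- divergence
    refine ENNReal.eq_top_of_forall_nnreal_le fun c => ?_
    obtain ⟨K, hK⟩ := exists_nat_ge c
    have h1 : ENNReal.ofReal (∫ t in Set.Ioo (0:ℝ) 1, ∑ k ∈ Finset.range K, r k t) ≤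
        ∫⁻ t in Set.Ioo (0:ℝ) 1, ENNReal.ofReal (-(Real.log (g t))) := by
      rw [ofReal_integral_eq_lintegral_ofReal
        (contInt _ (continuous_finsetSum _ fun k _ => hrc k))
        (.of_forall fun t => Finset.sum_nonneg fun k _ => hr0 k t)]
      refine lintegral_mono_ae ?_
      filter_upwards [hgpos] with t ht
      refine ENNReal.ofReal_le_ofReal ?_
      have : g t ≤ Real.exp (-∑ k ∈ Finset.range K, r k t) := by
        refine (hgG K t).trans ?_
        rw [← Finset.sum_neg_distrib, Real.exp_sum]
        exact Finset.prod_le_prod (fun k _ => (hp0 k t).le) fun k _ => hpr k t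
      have := (Real.log_le_iff_le_exp ht).2 this
      linarith
    refine le_trans ?_ h1
    have h2 : (K : ℝ) ≤ ∫ t in Set.Ioo (0:ℝ) 1, ∑ k ∈ Finset.range K, r k t := by
      rw [integral_finsetSum _ fun k _ => contInt _ (hrc k)]
      calc (K : ℝ) = ∑ k ∈ Finset.range K, (1:ℝ) := by simp
        _ ≤ _ := Finset.sum_le_sum fun k _ => by rw [conv]; exact hri k
    refine le_trans ?_ (ENNReal.ofReal_le_ofReal h2)
    rw [ENNReal.ofReal_natCast]
    exact_mod_cast hK
  · -- not spanning
    intro hspan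
    have : IsFiniteMeasure (wMeasure g) := isFiniteMeasure_withDensity_ofReal hgi.2
    have horth : ∀ n : ℕ, 1 ≤ n → (∀ k, (n : ℤ) ∉ D k) →
        ∫ t, expf n t ∂(wMeasure g) = 0 := by
      intro n hn1 hn
      have hE : ∀ t : ℝ, expf n t = SparseGamma.E (-n) t := by
        intro t; unfold expf SparseGamma.E; congr 1; push_cast; ring
      have hnorm : ∀ t : ℝ, ‖SparseGamma.E (-n) t‖ = 1 := by
        intro t
        rw [← hE, expf, show (2 * Real.pi * Complex.I * ((n : ℝ) : ℂ) * t : ℂ) =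
          ((2 * Real.pi * n * t : ℝ) : ℂ) * Complex.I by push_cast; ring]
        exact Complex.norm_exp_ofReal_mul_I _
      unfold wMeasure
      rw [integral_withDensity_eq_integral_toReal_smul hgm.ennreal_ofReal
        (.of_forall fun t => ENNReal.ofReal_lt_top)]
      have hlim : Tendsto (fun K => ∫ t in Set.Ioo (0:ℝ) 1,
          ((G K t : ℝ) : ℂ) * SparseGamma.E (-n) t) atTop
          (nhds (∫ t in Set.Ioo (0:ℝ) 1, (ENNReal.ofReal (g t)).toReal • expf n t)) := by
        refine tendsto_integral_of_dominated_convergence (fun _ => (1:ℝ)) (fun K => ?_)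
          (integrable_const _) (fun K => .of_forall fun t => ?_) (.of_forall fun t => ?_)
        · exact ((Complex.continuous_ofReal.comp (hGc K)).mul
            (SparseGamma.E_cont _)).aestronglyMeasurable
        · rw [norm_mul, hnorm, mul_one, Complex.norm_real, Real.norm_eq_abs,
            abs_of_nonneg (hG0 K t).le]
          exact hG1 K t
        · rw [ENNReal.toReal_ofReal (hg0 t), hE, Complex.real_smul]
          exact ((Complex.continuous_ofReal.tendsto _).comp (hgt t)).mul_const _
      refine tendsto_nhds_unique hlim ?_
      have hz : ∀ K, ∫ t in Set.Ioo (0:ℝ) 1,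
          ((G K t : ℝ) : ℂ) * SparseGamma.E (-n) t = 0 := fun K => by
        rw [← integral_Ioc_eq_integral_Ioo, ← intervalIntegral.integral_of_le zero_le_one]
        exact SparseGamma.TP_int (hTP K) n (by simpa using hn K)
      simp only [hz]
      exact tendsto_const_nhds
    let c : Lp ℂ 2 (wMeasure g) := (memLp_const (1:ℂ)).toLp
    have hc : (c : ℝ → ℂ) =ᵐ[wMeasure g] fun _ => (1:ℂ) := MemLp.coeFn_toLp _
    have hinner : ∀ h : Lp ℂ 2 (wMeasure g), inner ℂ c h = ∫ t, h t ∂(wMeasure g) := by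
      intro h
      rw [L2.inner_def]
      refine integral_congr_ae ?_
      filter_upwards [hc] with t ht
      rw [ht]; simp
    have hmem : c ∈ closure ((Submodule.span ℂ
      {h : Lp ℂ 2 (wMeasure g) | ∃ l ∈ {x : ℝ | ∃ n : ℕ, 1 ≤ n ∧
        n ∉ {γ : ℕ | 1 ≤ γ ∧ ∃ k, (γ : ℤ) ∈ D k} ∧ x = n},
        (h : ℝ → ℂ) =ᵐ[wMeasure g] expf l} :
        Submodule ℂ (Lp ℂ 2 (wMeasure g))) : Set (Lp ℂ 2 (wMeasure g))) := by
      unfold ExpSpans at hspan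
      rw [hspan]; trivial
    have hzero : inner ℂ c c = (0:ℂ) := by
      have hcl : IsClosed {h : Lp ℂ 2 (wMeasure g) | inner ℂ c h = (0:ℂ)} :=
        isClosed_eq (continuous_const.inner continuous_id) continuous_const
      refine closure_minimal ?_ hcl hmem
      intro h hh
      induction hh using Submodule.span_induction with
      | mem x hx =>
        obtain ⟨_, ⟨n, hn1, hn2, rfl⟩, hx⟩ := hx
        simp only [Set.mem_ofPred_eq]
        rw [hinner, integral_congr_ae hx]
        refine horth n hn1 fun k hk => hn2 ⟨hn1, k, hk⟩
      | zero => simp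
      | add x y _ _ hx hy =>
        simp only [Set.mem_ofPred_eq] at *
        rw [inner_add_right, hx, hy, add_zero]
      | smul a x _ hx =>
        simp only [Set.mem_ofPred_eq] at *
        rw [inner_smul_right, hx, mul_zero]
    rw [hinner, integral_congr_ae hc, integral_const] at hzero
    have hm0 : wMeasure g Set.univ = 0 := by
      simpa [measureReal_def, ENNReal.toReal_eq_zero_iff] using hzero
    unfold wMeasure at hm0
    rw [Measure.measure_univ_eq_zero, withDensity_eq_zero_iff hgm.ennreal_ofReal.aemeasurable] at hm0
    have hF : ∀ᵐ t ∂(volume.restrict (Set.Ioo (0:ℝ) 1)), False := by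
      filter_upwards [hm0, hgpos] with t h1 h2
      simp only [Pi.zero_apply, ENNReal.ofReal_eq_zero] at h1
      linarith
    rw [ae_iff] at hF
    simp at hF
end
end
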